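/- Let m ≥ 2 be even, σ₀ = (−1)^{m/2}, and L, T, τ > 0. Let q₀, q₁, …, q_{m−1} : [0,T] × ℝ → ℝ be C¹ functions, L-periodic in x, satisfying ∂_t q₀ + σ₀ ∂_x q_{m−1} = 0; τ ∂_t q_j + σ₀ (−1)^j ∂_x q_{m−j−1} = σ₀ (−1)^j q_{m−j} for j ∈ {1, …, m/2 − 1}; and τ ∂_t q_j + σ₀ (−1)^{j+m−1} ∂_x q_{m−j−1} = σ₀ (−1)^{j+m−1} q_{m−j} for j ∈ {m/2, …, m−1}. Then for all t ∈ [0,T], d/dt η(q)(t) = −∫₀^L q_{m/2}(t,x)² dx ≤ 0; in particular the energy η(q) is nonincreasing on [0,T]. -/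

import Mathlib

open MeasureTheory

/-- Partial derivative with respect to the first (time) variable. -/
noncomputable def pdt (u : ℝ → ℝ → ℝ) : ℝ → ℝ → ℝ :=
  fun t x => deriv (fun s => u s x) t

/-- Partial derivative with respect to the second (space) variable. -/
noncomputable def pdx (u : ℝ → ℝ → ℝ) : ℝ → ℝ → ℝ :=
  fun t x => deriv (fun y => u t y) x

/-- Differentiation under the integral sign for a jointly `C¹` integrand on a bounded interval. -/
theorem hasDerivAt_intervalIntegral_of_contDiff {f : ℝ → ℝ → ℝ}
    (hf : ContDiff ℝ 1 (Function.uncurry f)) (a b t : ℝ) :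
    HasDerivAt (fun s => ∫ x in a..b, f s x) (∫ x in a..b, pdt f t x) t := by
  have hderiv : ∀ s x, HasDerivAt (fun s => f s x)
      (fderiv ℝ (Function.uncurry f) (s, x) (1, 0)) s := fun s x =>
    (hf.differentiable one_ne_zero (s, x)).hasFDerivAt.comp_hasDerivAt (f := fun s => (s, x)) s
      ((hasDerivAt_id s).prodMk (hasDerivAt_const s x))
  have hpdt : ∀ s x, pdt f s x = fderiv ℝ (Function.uncurry f) (s, x) (1, 0) :=
    fun s x => (hderiv s x).deriv
  have hcont : Continuous (Function.uncurry (pdt f)) := by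
    have : Function.uncurry (pdt f) = fun p => fderiv ℝ (Function.uncurry f) p (1, 0) :=
      funext fun p => hpdt p.1 p.2
    rw [this]
    exact (hf.continuous_fderiv one_ne_zero).clm_apply continuous_const
  obtain ⟨C, hC⟩ := ((isCompact_Icc (a := t - 1) (b := t + 1)).prod
    (isCompact_uIcc (a := a) (b := b))).exists_bound_of_continuousOn hcont.continuousOn
  refine (intervalIntegral.hasDerivAt_integral_of_dominated_loc_of_deriv_le (F' := pdt f)
    (bound := fun _ => C) (Icc_mem_nhds (sub_one_lt t) (lt_add_one t)) ?_ ?_ ?_ ?_ ?_ ?_).2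
  · exact .of_forall fun s =>
      (hf.continuous.comp (Continuous.prodMk_right s)).aestronglyMeasurable
  · exact (hf.continuous.comp (Continuous.prodMk_right t)).intervalIntegrable _ _
  · exact (hcont.comp (Continuous.prodMk_right t)).aestronglyMeasurable
  · exact .of_forall fun x hx s hs => hC (s, x) ⟨hs, Set.uIoc_subset_uIcc hx⟩
  · exact intervalIntegrable_const
  · exact .of_forall fun x _ s _ => by rw [hpdt]; exact hderiv s x

theorem hasDerivAt_pdt {f : ℝ → ℝ → ℝ} (hf : ContDiff ℝ 1 (Function.uncurry f)) (t x : ℝ) :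
    HasDerivAt (fun s => f s x) (pdt f t x) t :=
  ((hf.comp (contDiff_prodMk_left x)).differentiable one_ne_zero t).hasDerivAt

theorem hasDerivAt_pdx {f : ℝ → ℝ → ℝ} (hf : ContDiff ℝ 1 (Function.uncurry f)) (t x : ℝ) :
    HasDerivAt (fun y => f t y) (pdx f t x) x :=
  ((hf.comp (contDiff_prodMk_right t)).differentiable one_ne_zero x).hasDerivAt

/-- The sign `σ₀ (-1)^j` (for `j < k`) or `σ₀ (-1)^(j+1)` (for `k ≤ j`), with `σ₀ = (-1)^k`, that
multiplies the flux and the source of the `j`-th equation of the system of order `2 k`. -/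
noncomputable def fluxSign (k j : ℕ) : ℝ :=
  (-1) ^ k * if j < k then (-1) ^ j else (-1) ^ (j + 1)

theorem fluxSign_flip {k j : ℕ} (hj : j < 2 * k) :
    fluxSign k (2 * k - 1 - j) = fluxSign k j := by
  unfold fluxSign
  congr 1
  split_ifs
  · omega
  · exact neg_one_pow_congr (by grind)
  · exact neg_one_pow_congr (by grind)
  · omega

theorem fluxSign_reflect {k j : ℕ} (hj : j ≤ 2 * k) (hjk : j ≠ k) :
    fluxSign k (2 * k - j) = -fluxSign k j := by
  unfold fluxSign
  rw [← mul_neg]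
  congr 1
  split_ifs
  · omega
  · rw [pow_succ, mul_neg_one, neg_neg]
    exact neg_one_pow_congr (by grind)
  · rw [pow_succ, mul_neg_one, neg_inj]
    exact neg_one_pow_congr (by grind)
  · omega

theorem fluxSign_self (k : ℕ) : fluxSign k k = -1 := by
  simp [fluxSign, pow_succ, ← mul_pow]

/-- The source terms cancel pairwise except for the middle one. -/
theorem sum_fluxSign_source {k : ℕ} (hk : 1 ≤ k) (u : ℕ → ℝ) :
    ∑ j ∈ Finset.Icc 1 (2 * k - 1), fluxSign k j * (u j * u (2 * k - j)) = -u k ^ 2 := by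
  have hflip : ∑ j ∈ Finset.Icc 1 (2 * k - 1), fluxSign k j * (u j * u (2 * k - j)) =
      ∑ j ∈ Finset.Icc 1 (2 * k - 1), fluxSign k (2 * k - j) * (u j * u (2 * k - j)) := by
    refine Finset.sum_nbij' (2 * k - ·) (2 * k - ·) ?_ ?_ ?_ ?_ ?_ <;> intro j hj <;>
      rw [Finset.mem_Icc] at hj
    · rw [Finset.mem_Icc]; omega
    · rw [Finset.mem_Icc]; omega
    · omega
    · omega
    · rw [show 2 * k - (2 * k - j) = j by omega, mul_comm (u j)]
  have hmid : ∑ j ∈ Finset.Icc 1 (2 * k - 1),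
      (fluxSign k j + fluxSign k (2 * k - j)) * (u j * u (2 * k - j)) = -2 * u k ^ 2 := by
    rw [Finset.sum_eq_single_of_mem k (by rw [Finset.mem_Icc]; omega)]
    · rw [show 2 * k - k = k by omega, fluxSign_self]
      ring
    · intro j hj hjk
      rw [Finset.mem_Icc] at hj
      rw [fluxSign_reflect (by omega) hjk]
      ring
  simp only [add_mul, Finset.sum_add_distrib] at hmid
  linarith

/-- The flux terms combine to the derivative of a quadratic form. -/
theorem sum_fluxSign_flux (k : ℕ) (u v : ℕ → ℝ) :
    ∑ j ∈ Finset.range (2 * k), fluxSign k j / 2 *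
        (v j * u (2 * k - 1 - j) + u j * v (2 * k - 1 - j)) =
      ∑ j ∈ Finset.range (2 * k), fluxSign k j * (u j * v (2 * k - 1 - j)) := by
  have hflip : ∑ j ∈ Finset.range (2 * k), fluxSign k j / 2 * (v j * u (2 * k - 1 - j)) =
      ∑ j ∈ Finset.range (2 * k), fluxSign k j / 2 * (u j * v (2 * k - 1 - j)) := by
    rw [← Finset.sum_range_reflect]
    refine Finset.sum_congr rfl fun j hj => ?_
    rw [Finset.mem_range] at hj
    rw [fluxSign_flip hj, show 2 * k - 1 - (2 * k - 1 - j) = j by omega, mul_comm (u j)]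
  simp only [mul_add, Finset.sum_add_distrib]
  rw [hflip, ← Finset.sum_add_distrib]
  exact Finset.sum_congr rfl fun j _ => by ring

/-- Energy dissipation for the Ketcheson–Biswas hyperbolic approximation of the
linear higher-order equation `∂_t u + σ₀ ∂_x^m u = 0` with even leading order `m`
and the stability choice `σ₀ = (-1)^(m/2)`:
`d/dt η(q)(t) = -∫₀^L q_{m/2}² dx ≤ 0`, so the energy is nonincreasing. -/
theorem linear_even_order_hyperbolic_energy_dissipation
    (m : ℕ) (hm : Even m) (hm2 : 2 ≤ m)
    (σ₀ : ℝ) (hσ : σ₀ = (-1 : ℝ) ^ (m / 2))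
    (L T τ : ℝ) (hL : 0 < L) (hT : 0 < T) (hτ : 0 < τ)
    (q : ℕ → ℝ → ℝ → ℝ)
    (hq : ∀ j < m, ContDiff ℝ 1 (Function.uncurry (q j)))
    (hper : ∀ j < m, ∀ t, Function.Periodic (q j t) L)
    (heq₀ : ∀ t ∈ Set.Icc (0:ℝ) T, ∀ x : ℝ,
      pdt (q 0) t x + σ₀ * pdx (q (m - 1)) t x = 0)
    (heqlow : ∀ j ∈ Finset.Icc 1 (m / 2 - 1), ∀ t ∈ Set.Icc (0:ℝ) T, ∀ x : ℝ,
      τ * pdt (q j) t x + σ₀ * (-1 : ℝ) ^ j * pdx (q (m - j - 1)) t x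
        = σ₀ * (-1 : ℝ) ^ j * q (m - j) t x)
    (heqhigh : ∀ j ∈ Finset.Icc (m / 2) (m - 1), ∀ t ∈ Set.Icc (0:ℝ) T, ∀ x : ℝ,
      τ * pdt (q j) t x + σ₀ * (-1 : ℝ) ^ (j + m - 1) * pdx (q (m - j - 1)) t x
        = σ₀ * (-1 : ℝ) ^ (j + m - 1) * q (m - j) t x) :
    (∀ t ∈ Set.Icc (0:ℝ) T,
        HasDerivWithinAt
          (fun s => ∫ x in (0:ℝ)..L,
            (q 0 s x ^ 2 / 2 + τ / 2 * ∑ j ∈ Finset.Icc 1 (m - 1), q j s x ^ 2))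
          (- ∫ x in (0:ℝ)..L, q (m / 2) t x ^ 2)
          (Set.Icc (0:ℝ) T) t ∧
        (- ∫ x in (0:ℝ)..L, q (m / 2) t x ^ 2) ≤ 0) ∧
      AntitoneOn
        (fun s => ∫ x in (0:ℝ)..L,
          (q 0 s x ^ 2 / 2 + τ / 2 * ∑ j ∈ Finset.Icc 1 (m - 1), q j s x ^ 2))
        (Set.Icc (0:ℝ) T) := by
  obtain ⟨k, rfl⟩ := even_iff_two_dvd.mp hm
  rw [show 2 * k / 2 = k by omega] at *
  have hk : 1 ≤ k := by omega
  have hflux₀ : ∀ t ∈ Set.Icc (0:ℝ) T, ∀ x,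
      pdt (q 0) t x = -(fluxSign k 0 * pdx (q (2 * k - 1 - 0)) t x) := by
    intro t ht x
    have h := heq₀ t ht x
    rw [hσ] at h
    simp only [fluxSign, if_pos (show 0 < k from hk), pow_zero, mul_one, Nat.sub_zero]
    linarith
  have hflux : ∀ j ∈ Finset.Icc 1 (2 * k - 1), ∀ t ∈ Set.Icc (0:ℝ) T, ∀ x,
      τ * pdt (q j) t x =
        fluxSign k j * q (2 * k - j) t x - fluxSign k j * pdx (q (2 * k - 1 - j)) t x := by
    intro j hj t ht x
    rw [Finset.mem_Icc] at hj
    rw [show 2 * k - 1 - j = 2 * k - j - 1 by omega]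
    rcases lt_or_ge j k with hjk | hjk
    · have h := heqlow j (by rw [Finset.mem_Icc]; omega) t ht x
      rw [hσ] at h
      simp only [fluxSign, if_pos hjk]
      linarith
    · have h := heqhigh j (by rw [Finset.mem_Icc]; omega) t ht x
      have hsign : (-1 : ℝ) ^ (j + 2 * k - 1) = (-1) ^ (j + 1) :=
        neg_one_pow_congr (by grind)
      rw [hσ, hsign] at h
      simp only [fluxSign, if_neg hjk.not_gt]
      linarith
  set e : ℝ → ℝ → ℝ := fun s x =>
    q 0 s x ^ 2 / 2 + τ / 2 * ∑ j ∈ Finset.Icc 1 (2 * k - 1), q j s x ^ 2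
  have hq_mem : ∀ j ∈ Finset.Icc 1 (2 * k - 1), ContDiff ℝ 1 (Function.uncurry (q j)) :=
    fun j hj => hq j (by rw [Finset.mem_Icc] at hj; omega)
  have he_smooth : ContDiff ℝ 1 (Function.uncurry e) :=
    (((hq 0 (by omega)).pow 2).div_const 2).add
      (contDiff_const.mul (ContDiff.sum fun j hj => (hq_mem j hj).pow 2))
  have hmid_cont : ∀ t, Continuous fun x => q k t x ^ 2 := fun t =>
    ((hq k (by omega)).continuous.comp (Continuous.prodMk_right t)).pow 2
  -- The energy flux, whose space derivative is the transport part of the energy balance.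
  let F : ℝ → ℝ → ℝ := fun t x =>
    ∑ j ∈ Finset.range (2 * k), fluxSign k j / 2 * (q j t x * q (2 * k - 1 - j) t x)
  have hF_deriv : ∀ t x, HasDerivAt (F t) (∑ j ∈ Finset.range (2 * k),
      fluxSign k j * (q j t x * pdx (q (2 * k - 1 - j)) t x)) x := by
    intro t x
    rw [← sum_fluxSign_flux k (fun j => q j t x) fun j => pdx (q j) t x]
    refine HasDerivAt.fun_sum fun j hj => ?_
    rw [Finset.mem_range] at hj
    exact ((hasDerivAt_pdx (hq j hj) t x).mul
      (hasDerivAt_pdx (hq (2 * k - 1 - j) (by omega)) t x)).const_mul _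
  have hbalance : ∀ t ∈ Set.Icc (0:ℝ) T, ∀ x,
      pdt e t x = -deriv (F t) x - q k t x ^ 2 := by
    intro t ht x
    have hderiv : HasDerivAt (fun s => e s x) (q 0 t x * pdt (q 0) t x +
        ∑ j ∈ Finset.Icc 1 (2 * k - 1), q j t x * (τ * pdt (q j) t x)) t := by
      have h₀ := ((hasDerivAt_pdt (hq 0 (by omega)) t x).pow 2).div_const 2
      have h₁ := (HasDerivAt.fun_sum fun j hj =>
        (hasDerivAt_pdt (hq_mem j hj) t x).pow 2).const_mul (τ / 2)
      refine (h₀.add h₁).congr_deriv ?_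
      rw [Finset.mul_sum]
      congr 1
      · simp only [Nat.cast_ofNat]; ring
      · exact Finset.sum_congr rfl fun j _ => by simp only [Nat.cast_ofNat]; ring
    have hrange : Finset.range (2 * k) = insert 0 (Finset.Icc 1 (2 * k - 1)) := by
      ext j
      simp only [Finset.mem_range, Finset.mem_insert, Finset.mem_Icc]
      omega
    rw [show pdt e t x = _ from hderiv.deriv, (hF_deriv t x).deriv, hrange,
      Finset.sum_insert (by simp), hflux₀ t ht x, sub_eq_add_neg _ (q k t x ^ 2),
      ← sum_fluxSign_source hk fun j => q j t x, neg_add, add_assoc,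
      ← Finset.sum_neg_distrib, ← Finset.sum_add_distrib]
    congr 1
    · ring
    · exact Finset.sum_congr rfl fun j hj => by rw [hflux j hj t ht x]; ring
  have hF_smooth : ∀ t, ContDiff ℝ 1 (F t) := fun t =>
    ContDiff.sum fun j hj => by
      rw [Finset.mem_range] at hj
      exact contDiff_const.mul (((hq j hj).comp (contDiff_prodMk_right t)).mul
        ((hq (2 * k - 1 - j) (by omega)).comp (contDiff_prodMk_right t)))
  have hF_int : ∀ t, ∫ x in (0:ℝ)..L, deriv (F t) x = 0 := by
    intro t
    rw [intervalIntegral.integral_deriv_eq_sub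
      (fun x _ => (hF_deriv t x).differentiableAt)
      (((hF_smooth t).continuous_deriv le_rfl).intervalIntegrable _ _), sub_eq_zero]
    refine Finset.sum_congr rfl fun j hj => ?_
    rw [Finset.mem_range] at hj
    rw [(hper j hj t).eq, (hper (2 * k - 1 - j) (by omega) t).eq]
  have hmain : ∀ t ∈ Set.Icc (0:ℝ) T,
      HasDerivAt (fun s => ∫ x in (0:ℝ)..L, e s x) (-∫ x in (0:ℝ)..L, q k t x ^ 2) t := by
    intro t ht
    refine (hasDerivAt_intervalIntegral_of_contDiff he_smooth 0 L t).congr_deriv ?_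
    rw [intervalIntegral.integral_congr fun x _ => hbalance t ht x,
      intervalIntegral.integral_sub
        (((hF_smooth t).continuous_deriv le_rfl).fun_neg.intervalIntegrable _ _)
        ((hmid_cont t).intervalIntegrable _ _),
      intervalIntegral.integral_neg, hF_int, neg_zero, zero_sub]
  have hnonpos : ∀ t, (-∫ x in (0:ℝ)..L, q k t x ^ 2) ≤ 0 := fun t =>
    neg_nonpos.mpr (intervalIntegral.integral_nonneg hL.le fun x _ => sq_nonneg _)
  refine ⟨fun t ht => ⟨(hmain t ht).hasDerivWithinAt, hnonpos t⟩, ?_⟩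
  exact antitoneOn_of_hasDerivWithinAt_nonpos (convex_Icc 0 T)
    (fun t ht => (hmain t ht).continuousAt.continuousWithinAt)
    (fun t ht => (hmain t (interior_subset ht)).hasDerivWithinAt) fun t _ => hnonpos t
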